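/- Let k ≥ 2 be an integer, and let y be a real parameter with y ∉ {0, 1/3} and U_k((1-y)/(2y)) ≠ 0, and set ψ = (1-y)/(2y). Then the sum of all entries of C(y)^{-1} satisfies Σ_{i=1}^{k} Σ_{j=1}^{k} (C(y)^{-1})_{ij} = k/(1-3y) - (2y/(1-3y)²)·(U_k(ψ) - U_{k-1}(ψ) - 1)/U_k(ψ). -/

import Mathlib

/-!
The columns of `C(y)⁻¹` are discrete Green functions of the three-term recurrence
`2ψ f n - f (n - 1) - f (n + 1)` with Dirichlet conditions `f (-1) = f k = 0`. The products
`U_{min m n} U_{k - 1 - max m n}` solve it with the point source `U_k` at `n`, because of the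
addition formula `U_{m + n} = U_m U_n - U_{m - 1} U_{n - 1}`; hence `C(y)` is invertible when
`U_k(ψ) ≠ 0`.

The vector of row sums solves `C(y) v = 1`. A suitable constant vector fails this only at both ends,
and subtracting the homogeneous solutions `U_i` and `U_{k - 1 - i}` repairs the boundary, so that
`v i` is proportional to `U_k - U_i - U_{k - 1 - i}`. Summing over `i` leaves only
`U_0 + ⋯ + U_{k - 1}`, which telescopes after multiplication by `2ψ - 2`.
-/

/-- Evaluation of the Chebyshev polynomial of the second kind `U_n` at a real `x`. -/
noncomputable def chebU (n : ℤ) (x : ℝ) : ℝ := (Polynomial.Chebyshev.U ℝ n).eval x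

/-- The `k×k` tridiagonal matrix `C(y)` with diagonal entries `1-y`, sub- and super-diagonal
entries `-y`, and all other entries `0`. -/
def Cmat (k : ℕ) (y : ℝ) : Matrix (Fin k) (Fin k) ℝ :=
  Matrix.of fun i j =>
    if (i : ℕ) = (j : ℕ) then 1 - y
    else if (i : ℕ) + 1 = (j : ℕ) ∨ (j : ℕ) + 1 = (i : ℕ) then -y
    else 0

section Chebyshev

open Polynomial Polynomial.Chebyshev

variable (R : Type*) [CommRing R]

theorem chebyshevU_add (m n : ℤ) :
    U R (m + n) = U R m * U R n - U R (m - 1) * U R (n - 1) := by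
  induction n using Polynomial.Chebyshev.induct with
  | zero => simp
  | one => simp [U_add_one, mul_comm]
  | add_two n ih₁ ih₀ =>
    have shift : (n : ℤ) + 2 - 1 = n + 1 := by ring
    rw [add_sub_cancel_right] at ih₁
    rw [← add_assoc] at ih₁ ⊢
    rw [U_add_two, ih₁, ih₀, U_add_two, shift, U_add_one R n]
    ring
  | neg_add_one n ih₀ ih₁ =>
    rw [← add_sub_assoc, U_sub_one R (m + -n), add_assoc, ih₀, ih₁, add_sub_cancel_right,
      U_sub_one R (-n - 1), sub_add_cancel, U_sub_one R (-n)]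
    ring

theorem two_mul_X_sub_two_mul_sum_chebyshevU (k : ℕ) :
    (2 * X - 2) * ∑ i ∈ Finset.range k, U R i = U R k - U R (k - 1) - 1 := by
  induction k with
  | zero => simp
  | succ k ih =>
    rw [Finset.sum_range_succ, mul_add, ih, Nat.cast_succ, U_add_one, add_sub_cancel_right]
    ring

theorem sum_chebyshevU_sub_sub_reflect (k : ℕ) :
    ∑ i : Fin k, (U R k - U R (i : ℕ) - U R (k - 1 - (i : ℕ))) =
      k * U R k - 2 * ∑ i ∈ Finset.range k, U R i := by
  have reflect : ∑ i ∈ Finset.range k, U R (k - 1 - i) = ∑ i ∈ Finset.range k, U R i := by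
    rw [← Finset.sum_range_reflect]
    refine Finset.sum_congr rfl fun i hi => congrArg (U R) ?_
    have := Finset.mem_range.mp hi
    lia
  rw [← Finset.sum_range fun i : ℕ => U R k - U R i - U R (k - 1 - i), Finset.sum_sub_distrib,
    Finset.sum_sub_distrib, reflect, Finset.sum_const, Finset.card_range, nsmul_eq_mul]
  ring

/-- The Green function of the Chebyshev recurrence with Dirichlet conditions at `-1` and `k`.
Indices are integers so that both boundary points are allowed. -/
noncomputable def chebyshevGreen (k m n : ℤ) : R[X] :=
  U R (min m n) * U R (k - 1 - max m n)

variable {R}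

theorem chebyshevGreen_neg_one_left {k n : ℤ} (hn : -1 ≤ n) : chebyshevGreen R k (-1) n = 0 := by
  simp [chebyshevGreen, hn]

theorem chebyshevGreen_self_left {k n : ℤ} (hn : n ≤ k) : chebyshevGreen R k k n = 0 := by
  simp [chebyshevGreen, hn]

theorem chebyshevGreen_recurrence (k m n : ℤ) :
    2 * X * chebyshevGreen R k m n - chebyshevGreen R k (m - 1) n - chebyshevGreen R k (m + 1) n =
      if m = n then U R k else 0 := by
  unfold chebyshevGreen
  rcases lt_trichotomy m n with hmn | rfl | hnm
  · rw [if_neg hmn.ne, min_eq_left hmn.le, max_eq_right hmn.le, min_eq_left (by lia),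
      max_eq_right (by lia), min_eq_left (by lia), max_eq_right (by lia), U_add_one]
    ring
  · have addition := chebyshevU_add R (m + 1) (k - 1 - m)
    have source : m + 1 + (k - 1 - m) = k := by ring
    have right_neighbour : k - 1 - m - 1 = k - 1 - (m + 1) := by ring
    rw [source, right_neighbour, add_sub_cancel_right, U_add_one] at addition
    rw [if_pos rfl, min_self, max_self, min_eq_left (by lia), max_eq_right (by lia),
      min_eq_right (by lia), max_eq_left (by lia), addition]
    ring
  · have left_neighbour : k - 1 - (m - 1) = k - 1 - m + 1 := by ring
    have right_neighbour : k - 1 - (m + 1) = k - 1 - m - 1 := by ring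
    rw [if_neg hnm.ne', min_eq_right hnm.le, max_eq_left hnm.le, min_eq_right (by lia),
      max_eq_left (by lia), min_eq_right (by lia), max_eq_left (by lia), left_neighbour,
      right_neighbour, U_add_one]
    ring

end Chebyshev

section Tridiagonal

open scoped Matrix

/-- The symmetric tridiagonal Toeplitz matrix of size `k` with `a` on the diagonal and `b` on the
two adjacent diagonals; `C(y)` is the case `a = 1 - y`, `b = -y`. -/
def tridiagToeplitz {R : Type*} [Zero R] (k : ℕ) (a b : R) : Matrix (Fin k) (Fin k) R :=
  Matrix.of fun i j =>
    if (i : ℕ) = j then a else if (i : ℕ) + 1 = j ∨ (j : ℕ) + 1 = i then b else 0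

theorem tridiagToeplitz_mulVec_apply {R : Type*} [NonUnitalNonAssocSemiring R] {k : ℕ} (a b : R)
    {f : ℤ → R} (hleft : f (-1) = 0) (hright : f k = 0) (i : Fin k) :
    (tridiagToeplitz k a b *ᵥ fun j => f (j : ℕ)) i =
      a * f (i : ℕ) + b * f ((i : ℕ) - 1) + b * f ((i : ℕ) + 1) := by
  obtain ⟨i, hi⟩ := i
  have entry (j : ℕ) :
      (if i = j then a else if i + 1 = j ∨ j + 1 = i then b else 0) * f j =
        (if i = j then a * f j else 0) + (if j + 1 = i then b * f j else 0) +
          (if i + 1 = j then b * f j else 0) := by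
    split_ifs <;> first | lia | simp
  have left : ∑ j ∈ Finset.range k, (if j + 1 = i then b * f j else 0) = b * f (i - 1) := by
    cases i with
    | zero => simp [hleft]
    | succ i => simp [show i < k by lia]
  have right : ∑ j ∈ Finset.range k, (if i + 1 = j then b * f j else 0) = b * f (i + 1) := by
    rw [Finset.sum_ite_eq]
    split_ifs with h <;> rw [Finset.mem_range] at h
    · rw [Nat.cast_succ]
    · have last : (i : ℤ) + 1 = k := by lia
      rw [last, hright, mul_zero]
  simp only [Matrix.mulVec, dotProduct, tridiagToeplitz, Matrix.of_apply, entry]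
  rw [← Finset.sum_range (fun j : ℕ => (if i = j then a * f j else 0) +
    (if j + 1 = i then b * f j else 0) + (if i + 1 = j then b * f j else 0)),
    Finset.sum_add_distrib, Finset.sum_add_distrib, left, right, Finset.sum_ite_eq,
    if_pos (Finset.mem_range.mpr hi)]

end Tridiagonal

section Inverse

open Polynomial Polynomial.Chebyshev
open scoped Matrix

theorem mul_sum_inv_of_mulVec_eq_const {n R : Type*} [Fintype n] [DecidableEq n]
    [CommRing R] {A : Matrix n n R} (hA : IsUnit A) {v : n → R} {c : R} (hv : A *ᵥ v = fun _ => c) :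
    c * ∑ i, ∑ j, A⁻¹ i j = ∑ i, v i := by
  have hdet := (Matrix.isUnit_iff_isUnit_det A).mp hA
  have solution : v = A⁻¹ *ᵥ fun _ => c := by
    rw [← hv, Matrix.mulVec_mulVec, Matrix.nonsing_inv_mul A hdet, Matrix.one_mulVec]
  simp only [solution, Matrix.mulVec, dotProduct, ← Finset.sum_mul, mul_comm c]

variable {R : Type*} [CommRing R]

/-- The Green function as a matrix on the interior points `0, …, k - 1`, at the parameter `x`. -/
noncomputable def chebyshevGreenMatrix (k : ℕ) (x : R) : Matrix (Fin k) (Fin k) R :=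
  Matrix.of fun i j => (chebyshevGreen R k (i : ℕ) (j : ℕ)).eval x

theorem tridiagToeplitz_mul_chebyshevGreenMatrix (k : ℕ) (b x : R) :
    tridiagToeplitz k (2 * b * x) (-b) * chebyshevGreenMatrix k x =
      (b * (U R k).eval x) • 1 := by
  ext i j
  have recurrence := congrArg (eval x) (chebyshevGreen_recurrence (R := R) k (i : ℕ) (j : ℕ))
  simp only [eval_sub, eval_mul, eval_ofNat, eval_X, apply_ite (eval x), eval_zero, Nat.cast_inj,
    Fin.val_inj] at recurrence
  have hj : ((j : ℕ) : ℤ) ≤ k := by exact_mod_cast j.isLt.le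
  have column := tridiagToeplitz_mulVec_apply (2 * b * x) (-b)
    (f := fun m => (chebyshevGreen R k m (j : ℕ)).eval x)
    (by rw [chebyshevGreen_neg_one_left (by lia), eval_zero])
    (by rw [chebyshevGreen_self_left hj, eval_zero]) i
  calc
    (tridiagToeplitz k (2 * b * x) (-b) * chebyshevGreenMatrix k x) i j
    _ = _ := column
    _ = b * if i = j then (U R k).eval x else 0 := by linear_combination b * recurrence
    _ = ((b * (U R k).eval x) • (1 : Matrix (Fin k) (Fin k) R)) i j := by simp [Matrix.one_apply]

theorem isUnit_tridiagToeplitz (k : ℕ) {b x : R} (hb : IsUnit b) (hU : IsUnit ((U R k).eval x)) :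
    IsUnit (tridiagToeplitz k (2 * b * x) (-b)) := by
  obtain ⟨c, hc⟩ := (hb.mul hU).exists_right_inv
  refine .of_mul_eq_one (c • chebyshevGreenMatrix k x) ?_
  rw [Matrix.mul_smul, tridiagToeplitz_mul_chebyshevGreenMatrix, smul_smul, mul_comm, hc, one_smul]

theorem tridiagToeplitz_mulVec_chebyshevU (k : ℕ) (b x : R) :
    (tridiagToeplitz k (2 * b * x) (-b) *ᵥ
        fun i => (U R k - U R (i : ℕ) - U R (k - 1 - (i : ℕ))).eval x) =
      fun _ => b * (2 * x - 2) * (U R k).eval x := by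
  ext i
  have left_neighbour : (k : ℤ) - 1 - ((i : ℕ) - 1) = k - 1 - (i : ℕ) + 1 := by ring
  have right_neighbour : (k : ℤ) - 1 - ((i : ℕ) + 1) = k - 1 - (i : ℕ) - 1 := by ring
  rw [tridiagToeplitz_mulVec_apply (f := fun m => (U R k - U R m - U R (k - 1 - m)).eval x) _ _
    (by simp) (by simp), left_neighbour, right_neighbour, U_add_one, U_add_one]
  simp only [eval_sub, eval_mul, eval_ofNat, eval_X]
  ring

theorem mul_sum_inv_tridiagToeplitz (k : ℕ) {b x : R} (hb : IsUnit b)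
    (hU : IsUnit ((U R k).eval x)) :
    (b * (2 * x - 2)) ^ 2 * (U R k).eval x *
        ∑ i, ∑ j, (tridiagToeplitz k (2 * b * x) (-b))⁻¹ i j =
      b * (2 * x - 2) * k * (U R k).eval x -
        2 * b * ((U R k).eval x - (U R (k - 1)).eval x - 1) := by
  have row_sums := mul_sum_inv_of_mulVec_eq_const (isUnit_tridiagToeplitz k hb hU)
    (tridiagToeplitz_mulVec_chebyshevU k b x)
  rw [← eval_finsetSum, sum_chebyshevU_sub_sub_reflect] at row_sums
  have telescope := congrArg (eval x) (two_mul_X_sub_two_mul_sum_chebyshevU R k)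
  simp only [eval_sub, eval_mul, eval_ofNat, eval_X, eval_one, eval_natCast] at row_sums telescope
  linear_combination b * (2 * x - 2) * row_sums - 2 * b * telescope

theorem sum_of_entries_of_inverse_general {K : Type*} [Field K] (k : ℕ) {a b x : K} (hb : b ≠ 0)
    (hx : a = 2 * b * x) (hab : a - 2 * b ≠ 0) (hU : (U K k).eval x ≠ 0) :
    ∑ i, ∑ j, (tridiagToeplitz k a (-b))⁻¹ i j =
      k / (a - 2 * b) -
        2 * b / (a - 2 * b) ^ 2 *
          (((U K k).eval x - (U K (k - 1)).eval x - 1) / (U K k).eval x) := by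
  have key := mul_sum_inv_tridiagToeplitz k hb.isUnit hU.isUnit
  have hd : b * (2 * x - 2) = a - 2 * b := by rw [hx]; ring
  rw [hd, ← hx] at key
  generalize a - 2 * b = d at hab key ⊢
  field_simp
  linear_combination key

end Inverse

/-- With `ψ = (1-y)/(2y)`, the sum of all entries of `C(y)⁻¹` equals
`k/(1-3y) - (2y/(1-3y)²)·(U_k(ψ) - U_{k-1}(ψ) - 1)/U_k(ψ)`. -/
theorem sum_of_entries_of_inverse (k : ℕ) (hk : 2 ≤ k) (y : ℝ) (hy0 : y ≠ 0)
    (hy3 : y ≠ 1 / 3) (hU : chebU (k : ℤ) ((1 - y) / (2 * y)) ≠ 0) :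
    ∑ i : Fin k, ∑ j : Fin k, (Cmat k y)⁻¹ i j =
      k / (1 - 3 * y) -
        2 * y / (1 - 3 * y) ^ 2 *
          ((chebU (k : ℤ) ((1 - y) / (2 * y)) - chebU ((k : ℤ) - 1) ((1 - y) / (2 * y)) - 1) /
            chebU (k : ℤ) ((1 - y) / (2 * y))) := by
  rw [show 1 - 3 * y = 1 - y - 2 * y by ring]
  exact sum_of_entries_of_inverse_general k hy0 (by field_simp)
    (fun h => hy3 (by linear_combination -h / 3)) hU
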